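/- Every Newman quadrinomial Q(X) = X^a + X^b + X^c + 1 with integers 0 < c < b < a ≤ 14 divides some Littlewood polynomial of degree exactly m(Q) − 1, and Q divides no Littlewood polynomial of degree less than m(Q) − 1; that is, m(Q) − 1 is the smallest possible degree of a Littlewood multiple of Q. -/

import Mathlib

open Polynomial

/-- A Littlewood polynomial: a nonzero integer polynomial all of whose
coefficients (up to its degree) are `-1` or `1`. -/
def IsLittlewood (P : Polynomial ℤ) : Prop :=
  P ≠ 0 ∧ ∀ i ≤ P.natDegree, P.coeff i = 1 ∨ P.coeff i = -1

/-- For `P ∈ ℤ[X]`, `mdeg P` is the least positive integer `m` such that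
`(X + 1) * P̄` divides `X ^ m - 1` in `𝔽₂[X]`, where `P̄` is the reduction of
`P` modulo `2` (and `0` if no such `m` exists). -/
noncomputable def mdeg (P : Polynomial ℤ) : ℕ :=
  sInf {m : ℕ | 0 < m ∧
    (X + 1) * P.map (Int.castRingHom (ZMod 2)) ∣ X ^ m - 1}

/-! ### Littlewood polynomials modulo two -/

/-- Modulo two, a Littlewood polynomial of degree `n` is `1 + X + ⋯ + X ^ n`. -/
lemma IsLittlewood.X_add_one_mul_map {L : ℤ[X]} (hL : IsLittlewood L) :
    (X + 1) * L.map (Int.castRingHom (ZMod 2)) = X ^ (L.natDegree + 1) - 1 := by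
  have hmap : L.map (Int.castRingHom (ZMod 2)) = ∑ i ∈ Finset.range (L.natDegree + 1), X ^ i := by
    ext i
    simp only [coeff_map, finsetSum_coeff, coeff_X_pow, Finset.sum_ite_eq, Finset.mem_range]
    split_ifs with hi
    · rcases hL.2 i (by omega) with h | h <;> rw [h] <;> decide
    · rw [coeff_eq_zero_of_natDegree_lt (by omega), map_zero]
  have htwo : (X + 1 : (ZMod 2)[X]) = X - 1 := by
    rw [← CharTwo.sub_eq_add]
  rw [hmap, htwo, mul_geom_sum]

lemma mdeg_le_of_dvd_littlewood {Q L : ℤ[X]} (hL : IsLittlewood L) (hQ : Q ∣ L) :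
    mdeg Q ≤ L.natDegree + 1 := by
  refine Nat.sInf_le ⟨Nat.succ_pos _, ?_⟩
  rw [← hL.X_add_one_mul_map]
  exact mul_dvd_mul_left _ (Polynomial.map_dvd _ hQ)

/-- If `Q * T` is Littlewood and `T` has no `Q.natDegree` consecutive even coefficients below its
leading one, then the degree of `Q * T` is the smallest possible. -/
lemma mdeg_eq_of_littlewood_mul {Q T : ℤ[X]} (hQ : Q.Monic) (hL : IsLittlewood (Q * T))
    (hodd : ∀ j, j + Q.natDegree ≤ (Q * T).natDegree →
      ∃ d < Q.natDegree, (T.coeff (j + d) : ZMod 2) ≠ 0) :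
    mdeg Q = (Q * T).natDegree + 1 := by
  refine le_antisymm (mdeg_le_of_dvd_littlewood hL (dvd_mul_right _ _)) ?_
  refine le_csInf ⟨(Q * T).natDegree + 1, Nat.succ_pos _, ?_⟩ ?_
  · rw [← hL.X_add_one_mul_map]
    exact mul_dvd_mul_left _ (Polynomial.map_dvd _ (dvd_mul_right _ _))
  rintro k ⟨hk, S, hS⟩
  by_contra! hlt
  have hT := hL.X_add_one_mul_map
  set m := (Q * T).natDegree + 1 with hm
  rw [Polynomial.map_mul, ← mul_assoc] at hT
  set F : (ZMod 2)[X] := (X + 1) * Q.map (Int.castRingHom (ZMod 2)) with hF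
  set U := T.map (Int.castRingHom (ZMod 2)) with hU
  have hX : (X + 1 : (ZMod 2)[X]).Monic := monic_X_add_C 1
  have hXdeg : (X + 1 : (ZMod 2)[X]).natDegree = 1 := natDegree_X_add_C 1
  have hFmonic : F.Monic := hX.mul (hQ.map _)
  have hFdeg : F.natDegree = Q.natDegree + 1 := by
    rw [hF, hX.natDegree_mul (hQ.map _), hXdeg, hQ.natDegree_map, add_comm]
  have hS0 : S ≠ 0 := by
    rintro rfl
    rw [mul_zero] at hS
    exact (monic_X_pow_sub_C (1 : ZMod 2) hk.ne').ne_zero (by simpa using hS)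
  have hSdeg : Q.natDegree + 1 + S.natDegree = k := by
    rw [← hFdeg, ← hFmonic.natDegree_mul' hS0, ← hS]
    simpa using natDegree_X_pow_sub_C (n := k) (r := (1 : ZMod 2))
  have hcomm : U * X ^ k - U = S * X ^ m - S := by
    linear_combination U * hS + S * hT
  obtain ⟨d, hd, hne⟩ := hodd (k - Q.natDegree) (by omega)
  apply hne
  have hcoeff := congrArg (fun p => p.coeff (k - Q.natDegree + d)) hcomm
  simp only [coeff_sub, coeff_mul_X_pow'] at hcoeff
  rw [if_neg (by omega), if_neg (by omega),
    coeff_eq_zero_of_natDegree_lt (p := S) (by omega)] at hcoeff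
  simpa [hU] using hcoeff

/-! ### Certificates encoded in binary numbers

A quotient `T` with coefficients in `{-1, 0, 1}` is encoded by the numbers `u` and `s` whose binary
digits mark the nonzero and the positive coefficients of `T`. -/

section Certificate

variable (a b c : ℕ)

/-- The binary encoding of `(X ^ a + X ^ b + X ^ c + 1) * u` over the field with two elements. -/
def mulQuad (u : ℕ) : ℕ := u ^^^ u <<< c ^^^ u <<< b ^^^ u <<< a

/-- The positions `i` such that one of the digits `i`, `i - c`, `i - b`, `i - a` of `s` is set. -/
def spread (s : ℕ) : ℕ := s ||| s <<< c ||| s <<< b ||| s <<< a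

/-- Among the positions where an odd number of the digits `i`, `i - c`, `i - b`, `i - a` of `u` is
set, those where this number is three. -/
def triples (u : ℕ) : ℕ := (u &&& u <<< c) ||| (u <<< b &&& u <<< a)

/-- The positions of `t` at which all nonzero summands have the same sign. -/
def conflicts (t u s : ℕ) : ℕ := t ^^^ (t &&& spread a b c s &&& spread a b c (u ^^^ s))

/-- The positions from which a run of `d` digits of `u` contains a nonzero digit. -/
def runs (u : ℕ) : ℕ → ℕ
  | 0 => 0
  | d + 1 => u ||| runs u d >>> 1

/-- The numbers `u` and `s` encode a quotient `T` such that `(X ^ a + X ^ b + X ^ c + 1) * T` is a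
Littlewood polynomial of the smallest possible degree `m - 1`. -/
def IsCertificate (m u s : ℕ) : Prop :=
  0 < m ∧ s ||| u = u ∧ mulQuad a b c u = 2 ^ m - 1 ∧ conflicts a b c (triples a b c u) u s = 0 ∧
    runs u a = 2 ^ (m - a) - 1

instance (m u s : ℕ) : Decidable (IsCertificate a b c m u s) :=
  inferInstanceAs (Decidable (_ ∧ _))

end Certificate

lemma testBit_runs (u d j : ℕ) : (runs u d).testBit j = true ↔ ∃ i < d, u.testBit (j + i) := by
  induction d generalizing j with
  | zero => simp [runs]
  | succ d ih =>
    simp only [runs, Nat.testBit_or, Nat.testBit_shiftRight, Bool.or_eq_true]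
    rw [ih, Nat.exists_lt_succ_left]
    simp only [add_zero, add_comm, add_left_comm]

/-- The coefficient encoded by a digit of `u` and a digit of `s`. -/
def signOf (u s : Bool) : ℤ := bif u then bif s then 1 else -1 else 0

/-- The polynomial of degree less than `m` encoded by `u` and `s`. -/
noncomputable def signPoly (m u s : ℕ) : ℤ[X] :=
  ∑ i ∈ Finset.range m, C (signOf (u.testBit i) (s.testBit i)) * X ^ i

lemma coeff_signPoly {m u s : ℕ} (hu : ∀ i, m ≤ i → u.testBit i = false) (i : ℕ) :
    (signPoly m u s).coeff i = signOf (u.testBit i) (s.testBit i) := by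
  simp only [signPoly, finsetSum_coeff, coeff_C_mul, coeff_X_pow, mul_ite, mul_one, mul_zero,
    Finset.sum_ite_eq, Finset.mem_range]
  split_ifs with h
  · rfl
  · simp [hu i (by omega), signOf]

lemma coeff_X_pow_mul_signPoly {m u s : ℕ} (hu : ∀ i, m ≤ i → u.testBit i = false) (k i : ℕ) :
    (X ^ k * signPoly m u s).coeff i =
      signOf ((u <<< k).testBit i) ((s <<< k).testBit i) := by
  rw [coeff_X_pow_mul', Nat.testBit_shiftLeft, Nat.testBit_shiftLeft]
  by_cases h : k ≤ i <;> simp [h, coeff_signPoly hu, signOf]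

lemma signOf_sum_eq (u₀ s₀ u₁ s₁ u₂ s₂ u₃ s₃ : Bool) (h₀ : (s₀ || u₀) = u₀) (h₁ : (s₁ || u₁) = u₁)
    (h₂ : (s₂ || u₂) = u₂) (h₃ : (s₃ || u₃) = u₃) (hodd : (u₀ ^^ u₁ ^^ u₂ ^^ u₃) = true)
    (hconf : (((u₀ && u₁) || (u₂ && u₃)) ^^ (((u₀ && u₁) || (u₂ && u₃)) &&
      (s₀ || s₁ || s₂ || s₃) &&
      ((u₀ ^^ s₀) || (u₁ ^^ s₁) || (u₂ ^^ s₂) || (u₃ ^^ s₃)))) = false) :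
    signOf u₀ s₀ + signOf u₁ s₁ + signOf u₂ s₂ + signOf u₃ s₃ = 1 ∨
      signOf u₀ s₀ + signOf u₁ s₁ + signOf u₂ s₂ + signOf u₃ s₃ = -1 := by
  revert u₀ s₀ u₁ s₁ u₂ s₂ u₃ s₃
  decide

/-- A certificate provides a Littlewood multiple of the smallest possible degree. -/
lemma IsCertificate.exists_littlewood {a b c m u s : ℕ} (hcb : c < b) (hba : b < a)
    (h : IsCertificate a b c m u s) :
    ∃ L : ℤ[X], IsLittlewood L ∧ L.natDegree = mdeg (X ^ a + X ^ b + X ^ c + 1) - 1 ∧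
      (X ^ a + X ^ b + X ^ c + 1 : ℤ[X]) ∣ L := by
  obtain ⟨hm, hsub, hmul, hconf, hruns⟩ := h
  set Q : ℤ[X] := X ^ a + X ^ b + X ^ c + 1 with hQ
  have hlow : (X ^ b + X ^ c + 1 : ℤ[X]).degree < (a : ℕ) := by
    refine lt_of_le_of_lt (b := (b : WithBot ℕ)) ?_ (by exact_mod_cast hba)
    compute_degree
    simpa using ⟨le_rfl, Nat.cast_le.2 hcb.le⟩
  have hQmonic : Q.Monic := by
    simpa only [hQ, add_assoc] using monic_X_pow_add hlow
  have hQdeg : Q.natDegree = a := by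
    rw [hQ, add_assoc, add_assoc, natDegree_add_eq_left_of_degree_lt, natDegree_X_pow]
    rwa [degree_X_pow, ← add_assoc]
  have hrunBit : ∀ j, (∃ d < a, u.testBit (j + d)) ↔ j < m - a := fun j => by
    rw [← testBit_runs, hruns, Nat.testBit_two_pow_sub_one, decide_eq_true_iff]
  have hbound : ∀ i, m - a ≤ i → u.testBit i = false := fun i hi => by
    by_contra! hne
    exact absurd ((hrunBit i).1 ⟨0, by omega, by simpa using hne⟩) (by omega)
  set T := signPoly (m - a) u s with hT
  have hcoeff : ∀ i, (Q * T).coeff i =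
      signOf (u.testBit i) (s.testBit i) +
      signOf ((u <<< c).testBit i) ((s <<< c).testBit i) +
      signOf ((u <<< b).testBit i) ((s <<< b).testBit i) +
      signOf ((u <<< a).testBit i) ((s <<< a).testBit i) := fun i => by
    rw [← coeff_signPoly hbound, ← coeff_X_pow_mul_signPoly hbound,
      ← coeff_X_pow_mul_signPoly hbound, ← coeff_X_pow_mul_signPoly hbound, ← coeff_add,
      ← coeff_add, ← coeff_add, ← hT]
    congr 1
    rw [hQ]
    ring
  have hsubBit : ∀ k i, ((s <<< k).testBit i || (u <<< k).testBit i) = (u <<< k).testBit i :=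
    fun k i => by
      rw [← Nat.testBit_or, ← Nat.shiftLeft_or_distrib, hsub]
  have hpm : ∀ i < m, (Q * T).coeff i = 1 ∨ (Q * T).coeff i = -1 := fun i hi => by
    rw [hcoeff]
    refine signOf_sum_eq _ _ _ _ _ _ _ _ (by simpa using hsubBit 0 i) (hsubBit c i) (hsubBit b i)
      (hsubBit a i) ?_ ?_
    · have := congrArg (Nat.testBit · i) hmul
      simpa only [mulQuad, Nat.testBit_xor, Nat.testBit_two_pow_sub_one, hi, decide_true]
        using this
    · have := congrArg (Nat.testBit · i) hconf
      simpa only [conflicts, triples, spread, Nat.shiftLeft_xor_distrib, Nat.testBit_xor,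
        Nat.testBit_and, Nat.testBit_or, Nat.zero_testBit] using this
  have hzero : ∀ i, m ≤ i → (Q * T).coeff i = 0 := fun i hi => by
    have hu : ∀ k ≤ a, (u <<< k).testBit i = false := fun k hk => by
      rw [Nat.testBit_shiftLeft, hbound _ (by omega), Bool.and_false]
    rw [hcoeff, hu a le_rfl, hu b (by omega), hu c (by omega), show u.testBit i = false by
      simpa using hu 0 (by omega)]
    rfl
  have hlead : (Q * T).coeff (m - 1) ≠ 0 := by
    rcases hpm (m - 1) (by omega) with h | h <;> rw [h] <;> decide
  have hdeg : (Q * T).natDegree = m - 1 :=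
    le_antisymm (natDegree_le_iff_coeff_eq_zero.2 fun i hi => hzero i (by omega))
      (le_natDegree_of_ne_zero hlead)
  have hL : IsLittlewood (Q * T) :=
    ⟨fun h0 => hlead (by rw [h0, coeff_zero]), fun i hi => hpm i (by omega)⟩
  refine ⟨Q * T, hL, ?_, dvd_mul_right _ _⟩
  rw [mdeg_eq_of_littlewood_mul hQmonic hL, Nat.add_sub_cancel]
  intro j hj
  rw [hQdeg, hdeg] at hj
  obtain ⟨d, hd, hbit⟩ := (hrunBit j).2 (by omega)
  refine ⟨d, hQdeg.symm ▸ hd, ?_⟩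
  rw [hT, coeff_signPoly hbound, hbit]
  cases s.testBit (j + d) <;> decide

/-! ### Computing the certificates -/

/-- `f n`, computed so that kernel reduction evaluates `n` to a numeral first. -/
def evalThen {α : Type} (n : ℕ) (f : ℕ → α) : α :=
  match n with
  | 0 => f 0
  | k + 1 => f (k + 1)

lemma evalThen_eq {α : Type} (n : ℕ) (f : ℕ → α) : evalThen n f = f n := by
  cases n <;> rfl

section Search

variable (a b c : ℕ)

/-- The first `2 ^ k` coefficients, for `k ≤ 14`, of the inverse of
`(X + 1) * (X ^ a + X ^ b + X ^ c + 1)` over the field with two elements, as the product of the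
powers of this polynomial with exponents `2 ^ i` for `i < k`. -/
def invSeries : ℕ → ℕ
  | 0 => 1
  | k + 1 =>
    evalThen (invSeries k) fun v =>
    evalThen (mulQuad (a <<< k) (b <<< k) (c <<< k) v) fun w =>
    (w ^^^ w <<< (2 ^ k)) % 2 ^ (2 ^ 14)

/-- For every position of `v`, one of the four candidate positions selected by the digits of `r`. -/
def pick (v r : ℕ) : ℕ :=
  evalThen (v &&& r) fun x =>
  evalThen (v ^^^ x) fun y =>
  evalThen (x &&& (r >>> 3)) fun x₁ =>
  evalThen (y &&& (r >>> 3)) fun y₁ =>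
  (y ^^^ y₁) ||| y₁ >>> c ||| (x ^^^ x₁) >>> b ||| x₁ >>> a

/-- A parallel local search for signs without conflicts, with `r` as the source of randomness. The
positions of interest are those from `48` on; the lowest `32` positions carry noise, which keeps the
hash values of the intermediate numerals apart during kernel reduction. -/
def search (t u : ℕ) : ℕ → ℕ → ℕ → ℕ
  | 0, s, _ => s
  | k + 1, s, r =>
    evalThen (conflicts a b c t u s) fun v =>
    match v >>> 48 with
    | 0 => s
    | _ + 1 =>
      evalThen (s ^^^ (pick a b c v r &&& u) ^^^ r % 2 ^ 32) fun s₁ =>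
      evalThen (r >>> 7) fun r₁ =>
      search t u k s₁ r₁

/-- Compute a certificate and test it. The period of `invSeries` is read off from its first run of
`a` zeros. -/
def certified : Bool :=
  evalThen (invSeries a b c 14) fun v =>
  evalThen (runs v a) fun z =>
  evalThen (a + Nat.log2 (z ^^^ (z + 1))) fun m =>
  evalThen (v % 2 ^ m) fun u =>
  evalThen (triples a b c u) fun t =>
  evalThen (3 ^ 20000) fun r =>
  evalThen (t <<< 48 ||| (2 ^ 32 - 1)) fun t₁ =>
  evalThen (u <<< 48 ||| (2 ^ 32 - 1)) fun u₁ =>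
  evalThen (search a b c t₁ u₁ 2000 0 r >>> 48) fun s =>
  decide (IsCertificate a b c m u s)

end Search

lemma exists_isCertificate_of_certified {a b c : ℕ} (h : certified a b c = true) :
    ∃ m u s, IsCertificate a b c m u s := by
  simp only [certified, evalThen_eq] at h
  exact ⟨_, _, _, of_decide_eq_true h⟩

set_option maxHeartbeats 0 in
lemma certified_of_le (a b c : ℕ) (hc : 0 < c) (hcb : c < b) (hba : b < a) (ha : a ≤ 14) :
    certified a b c = true := by
  interval_cases a <;> interval_cases b <;> interval_cases c <;> decide +kernel

theorem newman_quadrinomials_deg_le_14_minimal_littlewood_multiples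
    (a b c : ℕ) (hc : 0 < c) (hcb : c < b) (hba : b < a) (ha : a ≤ 14) :
    (∃ L : Polynomial ℤ, IsLittlewood L ∧
        L.natDegree = mdeg (X ^ a + X ^ b + X ^ c + 1) - 1 ∧
        (X ^ a + X ^ b + X ^ c + 1 : Polynomial ℤ) ∣ L) ∧
    (∀ L : Polynomial ℤ, IsLittlewood L →
        (X ^ a + X ^ b + X ^ c + 1 : Polynomial ℤ) ∣ L →
        mdeg (X ^ a + X ^ b + X ^ c + 1) - 1 ≤ L.natDegree) := by
  obtain ⟨m, u, s, h⟩ := exists_isCertificate_of_certified (certified_of_le a b c hc hcb hba ha)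
  refine ⟨h.exists_littlewood hcb hba, fun L hL hQ => ?_⟩
  have := mdeg_le_of_dvd_littlewood hL hQ
  omega
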